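/- arXiv:1304.3302 — 5 statements merged into one kernel-verified Lean document; each statement's English description precedes it below -/
import Mathlib

section
/- Let μ₁, μ₂, ρ₁, ρ₂ > 0. For every z ∈ ℂ with Re z ≥ 0 one has Re ψ(z) > 0; in particular ψ(z) ≠ 0 on the closed right half-plane (ψ maps the closed right half-plane into the open right half-plane). -/
open Complex

/-- `ω(z) = (1 + ρ z/μ)^{1/2}`, principal branch. -/
noncomputable def omegaSym (μ ρ : ℝ) (z : ℂ) : ℂ :=
  (1 + (ρ : ℂ) * z / (μ : ℂ)) ^ ((1 : ℂ)/2)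

/-- The function `ψ` from the Lopatinskii analysis. -/
noncomputable def psiSym (μ₁ μ₂ ρ₁ ρ₂ : ℝ) (z : ℂ) : ℂ :=
  (μ₂ : ℂ) * ((omegaSym μ₁ ρ₁ z + 1)/(omegaSym μ₁ ρ₁ z ^ 2 + 1)) *
      ((omegaSym μ₂ ρ₂ z - 1)/omegaSym μ₂ ρ₂ z
        + 2 * (omegaSym μ₂ ρ₂ z + 1)/(omegaSym μ₂ ρ₂ z ^ 2 + 1))
  + (μ₁ : ℂ) * ((omegaSym μ₂ ρ₂ z + 1)/(omegaSym μ₂ ρ₂ z ^ 2 + 1)) *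
      ((omegaSym μ₁ ρ₁ z - 1)/omegaSym μ₁ ρ₁ z
        + 2 * (omegaSym μ₁ ρ₁ z + 1)/(omegaSym μ₁ ρ₁ z ^ 2 + 1))

/-!
The function has the form `ψ = μ₂ A(ω₁) B(ω₂) + μ₁ A(ω₂) B(ω₁)`, where `A` is `leftFactor` and `B`
is `rightFactor`. Since `2 - B w = (w - 1) / w * ((w² - 1) / (w² + 1))` is a product of two numbers
of modulus at most `1`, the value `B w` lies in the closed disc of centre `2` and radius `1`, so its
argument is at most `π / 6` in modulus. On the other hand, `1 / A w = w - 1 + 2 / (w + 1)` has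
argument less than `π / 3` in modulus as soon as that of `w` is at most `π / 4`. So every product
`A w * B w'` has positive real part.
-/

section DiscsAndSectors

theorem re_mul_pos_of_norm_sub_le {u v : ℂ} {c r : ℝ} (hu : r * ‖u‖ < c * u.re)
    (hv : ‖v - c‖ ≤ r) : 0 < (u * v).re := by
  have hsplit : (u * v).re = c * u.re + (u * (v - c)).re := by
    simp only [mul_re, sub_re, sub_im, ofReal_re, ofReal_im]
    ring
  have hnorm : ‖u * (v - c)‖ ≤ r * ‖u‖ := by
    rw [norm_mul, mul_comm]
    gcongr
  linarith [(abs_le.mp ((abs_re_le_norm (u * (v - c))).trans hnorm)).1]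

theorem norm_inv_lt_mul_re_inv {u : ℂ} {k : ℝ} (hu : ‖u‖ < k * u.re) :
    ‖u⁻¹‖ < k * u⁻¹.re := by
  have hu₀ : u ≠ 0 := by
    rintro rfl
    simp at hu
  have hnormSq : 0 < normSq u := normSq_pos.mpr hu₀
  rw [norm_inv, inv_re, ← mul_div_assoc, lt_div_iff₀ hnormSq]
  calc ‖u‖⁻¹ * normSq u = ‖u‖ := by
        rw [normSq_eq_norm_sq, pow_two, inv_mul_cancel_left₀ (norm_ne_zero_iff.mpr hu₀)]
    _ < k * u.re := hu

theorem norm_sub_one_div_self_le_one {w : ℂ} (hw : 1 / 2 ≤ w.re) : ‖(w - 1) / w‖ ≤ 1 := by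
  rw [norm_div]
  refine div_le_one_of_le₀ ?_ (norm_nonneg w)
  rw [← sq_le_sq₀ (norm_nonneg _) (norm_nonneg _), Complex.sq_norm, Complex.sq_norm,
    normSq_apply, normSq_apply, sub_re, sub_im, one_re, one_im]
  linarith

theorem norm_sub_one_div_add_one_le_one {v : ℂ} (hv : 0 ≤ v.re) :
    ‖(v - 1) / (v + 1)‖ ≤ 1 := by
  have h : 1 / 2 ≤ ((v + 1) / 2).re := by
    rw [div_ofNat_re, add_re, one_re]
    linarith
  convert norm_sub_one_div_self_le_one h using 2
  field_simp
  ring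

theorem re_sq_nonneg_of_abs_im_le_re {w : ℂ} (hw : |w.im| ≤ w.re) : 0 ≤ (w ^ 2).re := by
  have h : w.im ^ 2 ≤ w.re ^ 2 := sq_le_sq.mpr (hw.trans (le_abs_self _))
  rw [pow_two, mul_re]
  linarith

end DiscsAndSectors

/-- The first factor, `A w = (w + 1) / (w² + 1)`, of each of the two summands of `ψ`, as a function
of the symbol `w = ω(z)`. -/
noncomputable def leftFactor (w : ℂ) : ℂ :=
  (w + 1) / (w ^ 2 + 1)

/-- The second factor, `B w = (w - 1) / w + 2 (w + 1) / (w² + 1)`, of each of the two summands of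
`ψ`, as a function of the symbol `w = ω(z)`. -/
noncomputable def rightFactor (w : ℂ) : ℂ :=
  (w - 1) / w + 2 * (w + 1) / (w ^ 2 + 1)

theorem psiSym_eq_factors (μ₁ μ₂ ρ₁ ρ₂ : ℝ) (z : ℂ) :
    psiSym μ₁ μ₂ ρ₁ ρ₂ z =
      μ₂ * (leftFactor (omegaSym μ₁ ρ₁ z) * rightFactor (omegaSym μ₂ ρ₂ z)) +
        μ₁ * (leftFactor (omegaSym μ₂ ρ₂ z) * rightFactor (omegaSym μ₁ ρ₁ z)) := by
  simp only [psiSym, leftFactor, rightFactor, mul_assoc]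

section Factors

variable {w : ℂ}

theorem inv_leftFactor (hw : w + 1 ≠ 0) : (leftFactor w)⁻¹ = w - 1 + 2 / (w + 1) := by
  rw [leftFactor, inv_div]
  field_simp
  ring

theorem two_mul_re_lt_three_mul_re_inv_leftFactor (hw : |w.im| ≤ w.re) :
    2 * w.re < 3 * (leftFactor w)⁻¹.re := by
  have hre_nonneg : 0 ≤ w.re := (abs_nonneg _).trans hw
  have hre_pos : 0 < (w + 1).re := by
    rw [add_re, one_re]
    positivity
  have hnormSq_pos : 0 < normSq (w + 1) := normSq_pos.mpr (ne_zero_of_re_pos hre_pos)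
  have hnormSq_le : normSq (w + 1) ≤ 2 * w.re ^ 2 + 2 * w.re + 1 := by
    rw [normSq_apply, add_re, one_re, add_im, one_im]
    linarith [sq_le_sq.mpr (hw.trans (le_abs_self _))]
  have hre : (leftFactor w)⁻¹.re = w.re - 1 + 2 * (w.re + 1) / normSq (w + 1) := by
    simp [inv_leftFactor (ne_zero_of_re_pos hre_pos), div_re]
  have hcubic : 0 < 2 * w.re ^ 3 - 4 * w.re ^ 2 + w.re + 3 := by
    linarith [mul_nonneg hre_nonneg (sq_nonneg (w.re - 3 / 2)), sq_nonneg (w.re - 1)]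
  have hfrac : (3 - w.re) / 3 < 2 * (w.re + 1) / normSq (w + 1) :=
    calc (3 - w.re) / 3 < 2 * (w.re + 1) / (2 * w.re ^ 2 + 2 * w.re + 1) := by
          rw [lt_div_iff₀ (by positivity)]
          linarith
      _ ≤ 2 * (w.re + 1) / normSq (w + 1) := by gcongr
  rw [hre]
  linarith

theorem abs_im_inv_leftFactor_le (hw : 0 ≤ w.re) : |(leftFactor w)⁻¹.im| ≤ |w.im| := by
  have hw₁ : w + 1 ≠ 0 := ne_zero_of_re_pos (by rw [add_re, one_re]; positivity)
  have hnormSq : 1 ≤ normSq (w + 1) := by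
    rw [normSq_apply, add_re, one_re, add_im, one_im]
    linarith [mul_self_nonneg w.im, mul_self_nonneg w.re]
  have him : (leftFactor w)⁻¹.im = w.im * (1 - 2 / normSq (w + 1)) := by
    simp [inv_leftFactor hw₁, div_im]
    ring
  have hle : 2 / normSq (w + 1) ≤ 2 := div_le_self zero_le_two hnormSq
  have hnonneg : 0 ≤ 2 / normSq (w + 1) := by positivity
  rw [him, abs_mul]
  exact mul_le_of_le_one_right (abs_nonneg _) (abs_le.mpr ⟨by linarith, by linarith⟩)

theorem norm_leftFactor_lt_two_mul_re (hw : |w.im| ≤ w.re) :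
    ‖leftFactor w‖ < 2 * (leftFactor w).re := by
  have hre_nonneg : 0 ≤ w.re := (abs_nonneg _).trans hw
  have hre := two_mul_re_lt_three_mul_re_inv_leftFactor hw
  have him : (leftFactor w)⁻¹.im ^ 2 ≤ w.re ^ 2 :=
    sq_le_sq.mpr (((abs_im_inv_leftFactor_le hre_nonneg).trans hw).trans (le_abs_self _))
  rw [← inv_inv (leftFactor w)]
  apply norm_inv_lt_mul_re_inv
  rw [← sq_lt_sq₀ (norm_nonneg _) (by linarith), Complex.sq_norm, normSq_apply]
  nlinarith

theorem two_sub_rightFactor (hw₀ : w ≠ 0) (hw₁ : w ^ 2 + 1 ≠ 0) :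
    2 - rightFactor w = (w - 1) / w * ((w ^ 2 - 1) / (w ^ 2 + 1)) := by
  rw [rightFactor]
  field_simp
  ring

theorem norm_rightFactor_sub_two_le_one (hw : |w.im| ≤ w.re) (hw_re : 1 / 2 ≤ w.re) :
    ‖rightFactor w - 2‖ ≤ 1 := by
  have hsq : 0 ≤ (w ^ 2).re := re_sq_nonneg_of_abs_im_le_re hw
  have hw₀ : w ≠ 0 := ne_zero_of_re_pos (by linarith)
  have hw₁ : w ^ 2 + 1 ≠ 0 := ne_zero_of_re_pos (by rw [add_re, one_re]; positivity)
  rw [norm_sub_rev, two_sub_rightFactor hw₀ hw₁, norm_mul]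
  exact mul_le_one₀ (norm_sub_one_div_self_le_one hw_re) (norm_nonneg _)
    (norm_sub_one_div_add_one_le_one hsq)

theorem re_leftFactor_mul_rightFactor_pos {w' : ℂ} (hw : |w.im| ≤ w.re) (hw' : |w'.im| ≤ w'.re)
    (hw'_re : 1 / 2 ≤ w'.re) : 0 < (leftFactor w * rightFactor w').re :=
  re_mul_pos_of_norm_sub_le (c := 2) (r := 1)
    (by simpa only [one_mul] using norm_leftFactor_lt_two_mul_re hw)
    (by simpa only [ofReal_ofNat] using norm_rightFactor_sub_two_le_one hw' hw'_re)

end Factors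

section SquareRoot

theorem sqrt_re_le_re_cpow_half (u : ℂ) : √u.re ≤ (u ^ ((1 : ℂ) / 2)).re := by
  rw [one_div, cpow_inv_two_re]
  exact Real.sqrt_le_sqrt (by linarith [re_le_norm u])

theorem abs_im_cpow_half_le_re {u : ℂ} (hu : 0 ≤ u.re) :
    |(u ^ ((1 : ℂ) / 2)).im| ≤ (u ^ ((1 : ℂ) / 2)).re := by
  rw [one_div, abs_cpow_inv_two_im, cpow_inv_two_re]
  exact Real.sqrt_le_sqrt (by linarith)

theorem re_one_add_mul_div (μ ρ : ℝ) (z : ℂ) :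
    (1 + (ρ : ℂ) * z / (μ : ℂ)).re = 1 + ρ * z.re / μ := by
  rw [add_re, one_re, div_ofReal_re, re_ofReal_mul]

variable {μ ρ : ℝ} {z : ℂ}

theorem half_le_re_omegaSym (h : 1 / 4 ≤ 1 + ρ * z.re / μ) : 1 / 2 ≤ (omegaSym μ ρ z).re := by
  refine le_trans ?_ (sqrt_re_le_re_cpow_half _)
  rw [re_one_add_mul_div]
  exact Real.le_sqrt_of_sq_le (by linarith)

theorem abs_im_omegaSym_le_re (h : 0 ≤ 1 + ρ * z.re / μ) :
    |(omegaSym μ ρ z).im| ≤ (omegaSym μ ρ z).re :=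
  abs_im_cpow_half_le_re (by rwa [re_one_add_mul_div])

end SquareRoot

theorem psi_maps_right_halfplane_general (μ₁ μ₂ ρ₁ ρ₂ : ℝ) (hμ₁ : 0 < μ₁) (hμ₂ : 0 < μ₂)
    (z : ℂ) (hz₁ : 1 / 4 ≤ 1 + ρ₁ * z.re / μ₁) (hz₂ : 1 / 4 ≤ 1 + ρ₂ * z.re / μ₂) :
    0 < (psiSym μ₁ μ₂ ρ₁ ρ₂ z).re ∧ psiSym μ₁ μ₂ ρ₁ ρ₂ z ≠ 0 := by
  have hsector₁ := abs_im_omegaSym_le_re (le_trans (by norm_num) hz₁)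
  have hsector₂ := abs_im_omegaSym_le_re (le_trans (by norm_num) hz₂)
  have hpos : 0 < (psiSym μ₁ μ₂ ρ₁ ρ₂ z).re := by
    rw [psiSym_eq_factors, add_re, re_ofReal_mul, re_ofReal_mul]
    have h₁₂ := re_leftFactor_mul_rightFactor_pos hsector₁ hsector₂ (half_le_re_omegaSym hz₂)
    have h₂₁ := re_leftFactor_mul_rightFactor_pos hsector₂ hsector₁ (half_le_re_omegaSym hz₁)
    positivity
  exact ⟨hpos, ne_zero_of_re_pos hpos⟩

/-- `ψ` maps the closed right half-plane into the open right half-plane: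
`Re ψ(z) > 0` and in particular `ψ(z) ≠ 0` for `Re z ≥ 0`. -/
theorem psi_maps_right_halfplane (μ₁ μ₂ ρ₁ ρ₂ : ℝ)
    (hμ₁ : 0 < μ₁) (hμ₂ : 0 < μ₂) (hρ₁ : 0 < ρ₁) (hρ₂ : 0 < ρ₂) :
    ∀ z : ℂ, 0 ≤ z.re →
      0 < (psiSym μ₁ μ₂ ρ₁ ρ₂ z).re ∧ psiSym μ₁ μ₂ ρ₁ ρ₂ z ≠ 0 := by
  intro z hz
  have hquarter {μ ρ : ℝ} (hμ : 0 < μ) (hρ : 0 < ρ) : 1 / 4 ≤ 1 + ρ * z.re / μ := by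
    linarith only [show 0 ≤ ρ * z.re / μ by positivity]
  exact psi_maps_right_halfplane_general μ₁ μ₂ ρ₁ ρ₂ hμ₁ hμ₂ z (hquarter hμ₁ hρ₁) (hquarter hμ₂ hρ₂)
end

section
/- Let μ₁, μ₂, ρ₁, ρ₂ > 0. There exists an angle φ ∈ [0, π/2) such that for every z ∈ ℂ with Re z ≥ 0 one has ψ(z) ≠ 0 and |arg ψ(z)| ≤ φ; i.e., ψ maps the closed right half-plane into a closed sector strictly inside the open right half-plane. -/
open Complex

/-!
Put `α w = (w + 1) / (w² + 1)` and `β w = (w - 1) / w + 2 α w`, so that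
`ψ = μ₂ α(ω₁) β(ω₂) + μ₁ α(ω₂) β(ω₁)`. For `Re z ≥ 0` both roots lie in the region
`Re w ≥ 0`, `Re w² ≥ 1`, where `α` takes values in the sector `|Im| ≤ 5/4 Re`. In
`β w = 1 - 1/w + 2 α w` the imaginary parts of `-1/w` and `2 α w` have opposite signs, so the larger
of the two bounds `|Im (β w)|`, and `β` takes values in the sector `|Im| ≤ 3/4 Re`. As
`5/4 * 3/4 < 1`, the half-angles add up to less than `π/2`; sectors are convex cones, so the
weighted sum of the two products stays in the same sector.
-/

section Sector

variable {K L : ℝ} {x y w : ℂ}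

/-- The sector of slope `K` around the positive real axis, of half-angle `arctan K` and without its
apex, as a convex cone. -/
def sector (K : ℝ) : ConvexCone ℝ ℂ where
  carrier := {w | 0 < w.re ∧ |w.im| ≤ K * w.re}
  smul_mem' c hc w hw := by
    refine ⟨by simpa using mul_pos hc hw.1, ?_⟩
    simpa [abs_mul, abs_of_pos hc, mul_left_comm] using mul_le_mul_of_nonneg_left hw.2 hc.le
  add_mem' x hx y hy := by
    refine ⟨add_pos hx.1 hy.1, (abs_add_le x.im y.im).trans ?_⟩
    simpa [mul_add] using add_le_add hx.2 hy.2

lemma mem_sector_iff : w ∈ sector K ↔ 0 < w.re ∧ |w.im| ≤ K * w.re := Iff.rfl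

lemma ne_zero_of_mem_sector (hw : w ∈ sector K) : w ≠ 0 := by
  rintro rfl
  exact lt_irrefl 0 hw.1

-- The slope of the product is the tangent of the sum of the two half-angles.
lemma mul_mem_sector (hKL : K * L < 1) (hx : x ∈ sector K) (hy : y ∈ sector L) :
    x * y ∈ sector ((K + L) / (1 - K * L)) := by
  obtain ⟨hx_re, hx_im⟩ := hx
  obtain ⟨hy_re, hy_im⟩ := hy
  have hre : 0 < x.re * y.re := mul_pos hx_re hy_re
  have him_im : |x.im * y.im| ≤ K * L * (x.re * y.re) := by
    rw [abs_mul, mul_mul_mul_comm]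
    exact mul_le_mul hx_im hy_im (abs_nonneg _) ((abs_nonneg _).trans hx_im)
  have hre_im : |x.re * y.im| ≤ L * (x.re * y.re) := by
    rw [abs_mul, abs_of_pos hx_re, mul_left_comm]
    exact mul_le_mul_of_nonneg_left hy_im hx_re.le
  have him_re : |x.im * y.re| ≤ K * (x.re * y.re) := by
    rw [abs_mul, abs_of_pos hy_re, ← mul_assoc]
    exact mul_le_mul_of_nonneg_right hx_im hy_re.le
  have hKL_nonneg : 0 ≤ K + L :=
    nonneg_of_mul_nonneg_left (b := x.re * y.re)
      (by linarith [abs_nonneg (x.re * y.im), abs_nonneg (x.im * y.re)]) hre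
  have hmul_re : (1 - K * L) * (x.re * y.re) ≤ (x * y).re := by
    rw [mul_re]
    linarith [le_abs_self (x.im * y.im)]
  have hmul_im : |(x * y).im| ≤ (K + L) * (x.re * y.re) := by
    rw [mul_im]
    linarith [abs_add_le (x.re * y.im) (x.im * y.re)]
  refine ⟨(mul_pos (sub_pos.2 hKL) hre).trans_le hmul_re, hmul_im.trans ?_⟩
  rw [div_mul_eq_mul_div, le_div_iff₀ (sub_pos.2 hKL), mul_assoc, mul_comm (x.re * y.re)]
  exact mul_le_mul_of_nonneg_left hmul_re hKL_nonneg

lemma abs_arg_le_arctan_of_mem_sector (hw : w ∈ sector K) : |w.arg| ≤ Real.arctan K := by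
  obtain ⟨hre, him⟩ := hw
  obtain ⟨hlo, hhi⟩ := abs_lt.1 (abs_arg_lt_pi_div_two_iff.2 (Or.inl hre))
  obtain ⟨him_lo, him_hi⟩ := abs_le.1 him
  have harg : w.arg = Real.arctan (w.im / w.re) := by
    rw [← tan_arg, Real.arctan_tan hlo hhi]
  rw [harg, abs_le, ← Real.arctan_neg]
  constructor <;> apply Real.arctan_mono
  · rwa [le_div_iff₀ hre, neg_mul]
  · rwa [div_le_iff₀ hre]

end Sector

section SqrtHalfPlane

variable {μ ρ : ℝ} {w z : ℂ}

/-- The image of the half-plane `1 ≤ Re s` under the principal square root: the closed region to the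
right of the right-hand branch of the hyperbola `(Re w)² - (Im w)² = 1`. -/
def sqrtHalfPlane : Set ℂ := {w | 0 ≤ w.re ∧ 1 ≤ (w ^ 2).re}

lemma cpow_half_mem_sqrtHalfPlane {s : ℂ} (hs : 1 ≤ s.re) :
    s ^ ((1 : ℂ) / 2) ∈ sqrtHalfPlane := by
  rw [one_div]
  refine ⟨?_, by rwa [cpow_ofNat_inv_pow]⟩
  rw [cpow_inv_two_re]
  exact Real.sqrt_nonneg _

lemma omegaSym_mem_sqrtHalfPlane (hμ : 0 < μ) (hρ : 0 ≤ ρ) (hz : 0 ≤ z.re) :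
    omegaSym μ ρ z ∈ sqrtHalfPlane := by
  apply cpow_half_mem_sqrtHalfPlane
  rw [add_re, one_re, div_ofReal_re, re_ofReal_mul]
  exact le_add_of_nonneg_right (by positivity)

lemma re_sq_eq (w : ℂ) : (w ^ 2).re = w.re ^ 2 - w.im ^ 2 := by
  simp [pow_two]

lemma normSq_eq_sq_add_sq (w : ℂ) : normSq w = w.re ^ 2 + w.im ^ 2 := by
  rw [normSq_apply, pow_two, pow_two]

lemma one_le_re_of_mem_sqrtHalfPlane (hw : w ∈ sqrtHalfPlane) : 1 ≤ w.re := by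
  obtain ⟨hre, hsq⟩ := hw
  rw [re_sq_eq] at hsq
  nlinarith [sq_nonneg w.im]

lemma abs_im_le_re_of_mem_sqrtHalfPlane (hw : w ∈ sqrtHalfPlane) : |w.im| ≤ w.re := by
  obtain ⟨hre, hsq⟩ := hw
  rw [re_sq_eq] at hsq
  exact abs_le_of_sq_le_sq (by linarith) hre

lemma ne_zero_of_mem_sqrtHalfPlane (hw : w ∈ sqrtHalfPlane) : w ≠ 0 := by
  rintro rfl
  exact absurd (one_le_re_of_mem_sqrtHalfPlane hw) (by simp)

lemma two_mul_abs_im_mul_re_le_normSq (w : ℂ) : 2 * |w.im| * w.re ≤ normSq w := by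
  rw [normSq_eq_sq_add_sq, ← sq_abs w.im]
  linarith [sq_nonneg (w.re - |w.im|)]

lemma re_le_normSq_of_mem_sqrtHalfPlane (hw : w ∈ sqrtHalfPlane) : w.re ≤ normSq w := by
  have hre := one_le_re_of_mem_sqrtHalfPlane hw
  rw [normSq_eq_sq_add_sq]
  nlinarith [sq_nonneg w.im]

lemma normSq_sq_add_one (w : ℂ) :
    normSq (w ^ 2 + 1) = normSq w ^ 2 + 2 * (w ^ 2).re + 1 := by
  simp only [normSq_add, map_pow, map_one, mul_one]
  ring

lemma normSq_sq_add_one_le (w : ℂ) : normSq (w ^ 2 + 1) ≤ (normSq w + 1) ^ 2 := by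
  rw [normSq_sq_add_one, re_sq_eq, normSq_eq_sq_add_sq]
  nlinarith [sq_nonneg w.im]

lemma normSq_sq_add_one_pos_of_mem_sqrtHalfPlane (hw : w ∈ sqrtHalfPlane) :
    0 < normSq (w ^ 2 + 1) := by
  rw [normSq_sq_add_one]
  linarith [hw.2, sq_nonneg (normSq w)]

end SqrtHalfPlane

section Alpha

variable {w : ℂ}

/-- The factor `(w + 1) / (w² + 1)` of `ψ`, as a function of `w = ω(z)`. -/
noncomputable def alphaSym (w : ℂ) : ℂ := (w + 1) / (w ^ 2 + 1)

lemma re_alphaSym (w : ℂ) :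
    (alphaSym w).re = (w.re * (normSq w + 1) + (w ^ 2).re + 1) / normSq (w ^ 2 + 1) := by
  rw [alphaSym, div_re, ← add_div, normSq_eq_sq_add_sq w]
  congr 1
  simp only [pow_two, mul_re, mul_im, add_re, add_im, one_re, one_im, add_zero]
  ring

lemma im_alphaSym (w : ℂ) :
    (alphaSym w).im = -(w.im * ((normSq w + 2 * w.re - 1) / normSq (w ^ 2 + 1))) := by
  rw [alphaSym, div_im, ← sub_div, ← mul_div_assoc, ← neg_div, normSq_eq_sq_add_sq w]
  congr 1
  simp only [pow_two, mul_re, mul_im, add_re, add_im, one_re, one_im, add_zero]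
  ring

lemma four_mul_normSq_le_of_mem_sqrtHalfPlane (hw : w ∈ sqrtHalfPlane) :
    4 * normSq w ≤ w.re * normSq w + 5 * (w.re + 2) := by
  have hN : normSq w ≤ 2 * w.re ^ 2 := by
    rw [normSq_eq_sq_add_sq, ← sq_abs w.im]
    nlinarith [abs_nonneg w.im, abs_im_le_re_of_mem_sqrtHalfPlane hw]
  have hcubic : (4 - w.re) * (2 * w.re ^ 2) ≤ 5 * (w.re + 2) := by
    linarith [mul_nonneg hw.1 (sq_nonneg (w.re - 9 / 4)), sq_nonneg (w.re - 41 / 16)]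
  rcases le_total 4 w.re with hre | hre
  · linarith [mul_le_mul_of_nonneg_right hre (normSq_nonneg w)]
  · linarith [mul_le_mul_of_nonneg_left hN (sub_nonneg.2 hre)]

lemma alphaSym_mem_sector (hw : w ∈ sqrtHalfPlane) : alphaSym w ∈ sector (5 / 4) := by
  have ha := one_le_re_of_mem_sqrtHalfPlane hw
  have hN := re_le_normSq_of_mem_sqrtHalfPlane hw
  have hD := normSq_sq_add_one_pos_of_mem_sqrtHalfPlane hw
  have hu := hw.2
  have hcoef : 0 ≤ (normSq w + 2 * w.re - 1) / normSq (w ^ 2 + 1) :=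
    div_nonneg (by linarith) hD.le
  have him : |w.im| * (normSq w + 2 * w.re - 1) ≤
      5 / 4 * (w.re * (normSq w + 1) + (w ^ 2).re + 1) := by
    have hba : |w.im| * normSq w ≤ w.re * normSq w :=
      mul_le_mul_of_nonneg_right (abs_im_le_re_of_mem_sqrtHalfPlane hw) (normSq_nonneg w)
    linarith [abs_nonneg w.im, two_mul_abs_im_mul_re_le_normSq w,
      four_mul_normSq_le_of_mem_sqrtHalfPlane hw]
  rw [mem_sector_iff, re_alphaSym, im_alphaSym, abs_neg, abs_mul, abs_of_nonneg hcoef,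
    ← mul_div_assoc, ← mul_div_assoc]
  exact ⟨div_pos (by nlinarith) hD, (div_le_div_iff_of_pos_right hD).2 him⟩

end Alpha

section Beta

variable {w : ℂ}

/-- The factor `(w - 1) / w + 2 (w + 1) / (w² + 1)` of `ψ`, as a function of `w = ω(z)`. -/
noncomputable def betaSym (w : ℂ) : ℂ := (w - 1) / w + 2 * (w + 1) / (w ^ 2 + 1)

lemma betaSym_eq (hw : w ≠ 0) : betaSym w = 1 - w⁻¹ + 2 * alphaSym w := by
  rw [betaSym, alphaSym, sub_div, div_self hw, one_div, mul_div_assoc]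

lemma one_add_div_le_re_betaSym (hw : w ∈ sqrtHalfPlane) :
    1 + (w.re * normSq w + 2 * (w ^ 2).re + 1) / normSq (w ^ 2 + 1) ≤ (betaSym w).re := by
  have ha := one_le_re_of_mem_sqrtHalfPlane hw
  have hN := re_le_normSq_of_mem_sqrtHalfPlane hw
  have hD := normSq_sq_add_one_pos_of_mem_sqrtHalfPlane hw
  have hinv : (w⁻¹).re ≤ (w.re * normSq w + 2 * w.re + 1) / normSq (w ^ 2 + 1) := by
    rw [inv_re, div_le_div_iff₀ (by linarith) hD]
    calc w.re * normSq (w ^ 2 + 1)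
        ≤ w.re * (normSq w + 1) ^ 2 := by gcongr; exact normSq_sq_add_one_le w
      _ ≤ (w.re * normSq w + 2 * w.re + 1) * normSq w := by linarith
  have halpha : 2 * (alphaSym w).re =
      (w.re * normSq w + 2 * w.re + 1) / normSq (w ^ 2 + 1) +
        (w.re * normSq w + 2 * (w ^ 2).re + 1) / normSq (w ^ 2 + 1) := by
    rw [re_alphaSym]
    ring
  have hre : (betaSym w).re = 1 - (w⁻¹).re + 2 * (alphaSym w).re := by
    simp [betaSym_eq (ne_zero_of_mem_sqrtHalfPlane hw)]
  linarith

lemma im_betaSym (hw : w ≠ 0) :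
    (betaSym w).im =
      w.im * (1 / normSq w - 2 * ((normSq w + 2 * w.re - 1) / normSq (w ^ 2 + 1))) := by
  have him : (betaSym w).im = -(w⁻¹).im + 2 * (alphaSym w).im := by simp [betaSym_eq hw]
  rw [him, inv_im, im_alphaSym]
  ring

lemma abs_im_mul_le_of_mem_sqrtHalfPlane (hw : w ∈ sqrtHalfPlane) :
    2 * (|w.im| * (normSq w + 2 * w.re - 1)) ≤
      3 / 4 * (normSq (w ^ 2 + 1) + (w.re * normSq w + 2 * (w ^ 2).re + 1)) := by
  have hu := hw.2
  have hba : |w.im| * normSq w ≤ w.re * normSq w := by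
    gcongr
    exacts [normSq_nonneg w, abs_im_le_re_of_mem_sqrtHalfPlane hw]
  have hb : 4 * |w.im| ≤ normSq w + 1 := by
    rw [re_sq_eq] at hu
    rw [normSq_eq_sq_add_sq]
    linarith [sq_nonneg (|w.im| - 1), sq_abs w.im]
  have hbN : 4 * |w.im| * normSq w ≤ (normSq w + 1) * normSq w := by
    gcongr
    exact normSq_nonneg w
  rw [normSq_sq_add_one]
  have hquadratic : 37 * normSq w ≤ 7 * normSq w ^ 2 + 72 := by
    linarith [sq_nonneg (normSq w - 37 / 14)]
  linarith [abs_nonneg w.im, two_mul_abs_im_mul_re_le_normSq w]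

lemma betaSym_mem_sector (hw : w ∈ sqrtHalfPlane) : betaSym w ∈ sector (3 / 4) := by
  have ha := one_le_re_of_mem_sqrtHalfPlane hw
  have hN := re_le_normSq_of_mem_sqrtHalfPlane hw
  have hD := normSq_sq_add_one_pos_of_mem_sqrtHalfPlane hw
  have hN_pos : 0 < normSq w := by linarith
  have hu := hw.2
  have hre := one_add_div_le_re_betaSym hw
  have hre_one : 1 ≤ (betaSym w).re := (le_add_of_nonneg_right (by positivity)).trans hre
  have him_inv : |w.im| * (1 / normSq w) ≤ 3 / 4 * (betaSym w).re := by
    have hb : |w.im| / normSq w ≤ 1 / 2 := by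
      rw [div_le_div_iff₀ hN_pos two_pos, one_mul, mul_comm]
      exact (le_mul_of_one_le_right (by positivity) ha).trans (two_mul_abs_im_mul_re_le_normSq w)
    rw [mul_one_div]
    linarith
  have him_alpha : |w.im| * (2 * ((normSq w + 2 * w.re - 1) / normSq (w ^ 2 + 1))) ≤
      3 / 4 * (betaSym w).re := by
    refine le_trans ?_ (mul_le_mul_of_nonneg_left hre (by norm_num))
    rw [one_add_div hD.ne', ← mul_div_assoc, ← mul_div_assoc, ← mul_div_assoc,
      div_le_div_iff_of_pos_right hD, mul_left_comm]
    exact abs_im_mul_le_of_mem_sqrtHalfPlane hw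
  have hcoef : 0 ≤ (normSq w + 2 * w.re - 1) / normSq (w ^ 2 + 1) :=
    div_nonneg (by linarith) hD.le
  have him : |(betaSym w).im| = |(|w.im| * (1 / normSq w) -
      |w.im| * (2 * ((normSq w + 2 * w.re - 1) / normSq (w ^ 2 + 1))))| := by
    rw [im_betaSym (ne_zero_of_mem_sqrtHalfPlane hw), ← mul_sub, abs_mul, abs_mul, abs_abs]
  refine ⟨zero_lt_one.trans_le hre_one, ?_⟩
  rw [him]
  exact abs_sub_le_of_nonneg_of_le (by positivity) him_inv (by positivity) him_alpha

end Beta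

section Psi

variable {μ₁ μ₂ ρ₁ ρ₂ : ℝ} {w₁ w₂ z : ℂ}

lemma alphaSym_mul_betaSym_mem_sector (hw₁ : w₁ ∈ sqrtHalfPlane) (hw₂ : w₂ ∈ sqrtHalfPlane) :
    alphaSym w₁ * betaSym w₂ ∈ sector 32 := by
  convert mul_mem_sector (by norm_num) (alphaSym_mem_sector hw₁) (betaSym_mem_sector hw₂) using 2
  norm_num

lemma psiSym_eq (μ₁ μ₂ ρ₁ ρ₂ : ℝ) (z : ℂ) :
    psiSym μ₁ μ₂ ρ₁ ρ₂ z =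
      μ₂ • (alphaSym (omegaSym μ₁ ρ₁ z) * betaSym (omegaSym μ₂ ρ₂ z)) +
        μ₁ • (alphaSym (omegaSym μ₂ ρ₂ z) * betaSym (omegaSym μ₁ ρ₁ z)) := by
  simp only [psiSym, alphaSym, betaSym, real_smul, mul_assoc]

lemma psiSym_mem_sector (hμ₁ : 0 < μ₁) (hμ₂ : 0 < μ₂) (hρ₁ : 0 ≤ ρ₁) (hρ₂ : 0 ≤ ρ₂)
    (hz : 0 ≤ z.re) : psiSym μ₁ μ₂ ρ₁ ρ₂ z ∈ sector 32 := by
  have hω₁ := omegaSym_mem_sqrtHalfPlane hμ₁ hρ₁ hz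
  have hω₂ := omegaSym_mem_sqrtHalfPlane hμ₂ hρ₂ hz
  rw [psiSym_eq]
  exact (sector 32).add_mem
    ((sector 32).smul_mem hμ₂ (alphaSym_mul_betaSym_mem_sector hω₁ hω₂))
    ((sector 32).smul_mem hμ₁ (alphaSym_mul_betaSym_mem_sector hω₂ hω₁))

end Psi

open Real in
theorem psi_into_sector_general :
    ∃ φ : ℝ, 0 ≤ φ ∧ φ < π / 2 ∧
      ∀ μ₁ μ₂ ρ₁ ρ₂ : ℝ, 0 < μ₁ → 0 < μ₂ → 0 ≤ ρ₁ → 0 ≤ ρ₂ → ∀ z : ℂ, 0 ≤ z.re →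
        psiSym μ₁ μ₂ ρ₁ ρ₂ z ≠ 0 ∧ |(psiSym μ₁ μ₂ ρ₁ ρ₂ z).arg| ≤ φ := by
  refine ⟨arctan 32, arctan_nonneg.2 (by norm_num), arctan_lt_pi_div_two 32, ?_⟩
  intro μ₁ μ₂ ρ₁ ρ₂ hμ₁ hμ₂ hρ₁ hρ₂ z hz
  have hψ := psiSym_mem_sector hμ₁ hμ₂ hρ₁ hρ₂ hz
  exact ⟨ne_zero_of_mem_sector hψ, abs_arg_le_arctan_of_mem_sector hψ⟩

open Real in
/-- `ψ` maps the closed right half-plane into a closed sector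
`{w : w ≠ 0, |arg w| ≤ φ}` with `φ < π/2`. -/
theorem psi_into_sector (μ₁ μ₂ ρ₁ ρ₂ : ℝ)
    (hμ₁ : 0 < μ₁) (hμ₂ : 0 < μ₂) (hρ₁ : 0 < ρ₁) (hρ₂ : 0 < ρ₂) :
    ∃ φ : ℝ, 0 ≤ φ ∧ φ < π/2 ∧
      ∀ z : ℂ, 0 ≤ z.re →
        psiSym μ₁ μ₂ ρ₁ ρ₂ z ≠ 0 ∧ |(psiSym μ₁ μ₂ ρ₁ ρ₂ z).arg| ≤ φ := by
  obtain ⟨φ, hφ_nonneg, hφ_lt, hφ⟩ := psi_into_sector_general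
  exact ⟨φ, hφ_nonneg, hφ_lt, hφ μ₁ μ₂ ρ₁ ρ₂ hμ₁ hμ₂ hρ₁.le hρ₂.le⟩
end

section
/- Let μ₁, μ₂, ρ₁, ρ₂ > 0. Then the function ℓ is complex-analytic at every point z₀ ∈ ℂ with Re z₀ ≥ 0 (in particular ℓ is analytic on an open neighborhood of the closed right half-plane). -/
open Complex

/-- The numerator `N` in the definition of `ℓ = N/ψ`. -/
noncomputable def numSym (μ₁ μ₂ ρ₁ ρ₂ : ℝ) (z : ℂ) : ℂ :=
  (ρ₁ : ℂ) * (μ₂ : ℂ) *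
      ((omegaSym μ₁ ρ₁ z - 1)/(omegaSym μ₁ ρ₁ z * (omegaSym μ₁ ρ₁ z ^ 2 + 1))) *
      ((omegaSym μ₂ ρ₂ z - 1)/omegaSym μ₂ ρ₂ z
        + 2 * (omegaSym μ₂ ρ₂ z + 1)/(omegaSym μ₂ ρ₂ z ^ 2 + 1))
  - (ρ₂ : ℂ) * (μ₁ : ℂ) *
      ((omegaSym μ₂ ρ₂ z - 1)/(omegaSym μ₂ ρ₂ z * (omegaSym μ₂ ρ₂ z ^ 2 + 1))) *
      ((omegaSym μ₁ ρ₁ z - 1)/omegaSym μ₁ ρ₁ z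
        + 2 * (omegaSym μ₁ ρ₁ z + 1)/(omegaSym μ₁ ρ₁ z ^ 2 + 1))

/-- `ℓ(z) = N(z)/ψ(z)`. -/
noncomputable def ellSym (μ₁ μ₂ ρ₁ ρ₂ : ℝ) (z : ℂ) : ℂ :=
  numSym μ₁ μ₂ ρ₁ ρ₂ z / psiSym μ₁ μ₂ ρ₁ ρ₂ z

/-!
With `r w = w - 1 / w + 4 / (w + 1)`, the two factors which `ω = ω_j` contributes to `ψ` satisfy
`(ω - 1) / ω + 2 (ω + 1) / (ω² + 1) = (ω + 1) / (ω² + 1) * r ω`, so that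
`ψ = (ω₁ + 1) / (ω₁² + 1) * ((ω₂ + 1) / (ω₂² + 1)) * (μ₂ r ω₂ + μ₁ r ω₁)`.
Where `Re ω > 0` and `|ω| ≥ 1`, both `ω - 1 / ω` and `4 / (ω + 1)` have nonnegative real part, and
the second one is positive. Hence `Re (μ₂ r ω₂ + μ₁ r ω₁) > 0`, and `ψ` has no zero there.
If `Re z ≥ 0`, then `Re ω² = Re (1 + ρ z / μ) ≥ 1`, and the principal root `ω` has `Re ω ≥ 1`.
-/

lemma add_one_ne_zero_of_re_pos {w : ℂ} (hw : 0 < w.re) : w + 1 ≠ 0 :=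
  ne_zero_of_re_pos (by rw [add_re, one_re]; linarith)

lemma sq_add_one_ne_zero_of_re_pos {w : ℂ} (hw : 0 < w.re) : w ^ 2 + 1 ≠ 0 := by
  intro h
  have hsq : w ^ 2 = I ^ 2 := by rw [I_sq]; exact eq_neg_of_add_eq_zero_left h
  rcases sq_eq_sq_iff_eq_or_eq_neg.mp hsq with rfl | rfl <;> simp at hw

lemma inv_re_pos {w : ℂ} (hw : 0 < w.re) : 0 < (w⁻¹).re := by
  rw [inv_re]
  exact div_pos hw (normSq_pos.mpr (ne_zero_of_re_pos hw))

lemma inv_re_le_re {w : ℂ} (hw : 0 ≤ w.re) (hnorm : 1 ≤ ‖w‖) : (w⁻¹).re ≤ w.re := by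
  rw [inv_re, normSq_eq_norm_sq]
  exact div_le_self hw (one_le_pow₀ hnorm)

lemma cpow_half_re_pos_iff {w : ℂ} : 0 < (w ^ ((1 : ℂ) / 2)).re ↔ w ∈ slitPlane := by
  have hle : -w.re ≤ ‖w‖ := (neg_le_abs _).trans (abs_re_le_norm w)
  rw [one_div, cpow_inv_two_re, Real.sqrt_pos, div_pos_iff_of_pos_right two_pos,
    ← neg_lt_iff_pos_add, hle.lt_iff_ne, mem_slitPlane_iff_not_le_zero, ← neg_re_eq_norm]

lemma one_le_re_cpow_half {w : ℂ} (hw : 1 ≤ w.re) : 1 ≤ (w ^ ((1 : ℂ) / 2)).re := by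
  rw [one_div, cpow_inv_two_re, Real.one_le_sqrt]
  linarith [re_le_norm w]

/-- The quotient of the factors `(w - 1) / w + 2 (w + 1) / (w² + 1)` and `(w + 1) / (w² + 1)`
which `w = ω₁(z)` and `w = ω₂(z)` contribute to `ψ(z)`, in partial fractions. -/
noncomputable def factorRatio (w : ℂ) : ℂ :=
  w - w⁻¹ + 4 * (w + 1)⁻¹

lemma mul_factorRatio {w : ℂ} (hw : 0 < w.re) :
    (w + 1) / (w ^ 2 + 1) * factorRatio w = (w - 1) / w + 2 * (w + 1) / (w ^ 2 + 1) := by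
  have h₀ := ne_zero_of_re_pos hw
  have h₁ := add_one_ne_zero_of_re_pos hw
  have h₂ := sq_add_one_ne_zero_of_re_pos hw
  unfold factorRatio
  field_simp
  ring

lemma factorRatio_re_pos {w : ℂ} (hw : 0 < w.re) (hnorm : 1 ≤ ‖w‖) : 0 < (factorRatio w).re := by
  have h_inv : (w⁻¹).re ≤ w.re := inv_re_le_re hw.le hnorm
  have h_inv_add : 0 < ((w + 1)⁻¹).re := inv_re_pos (by rw [add_re, one_re]; linarith)
  rw [factorRatio, add_re, sub_re, mul_re, re_ofNat, im_ofNat, zero_mul, sub_zero]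
  linarith

section

variable {μ ρ μ₁ μ₂ ρ₁ ρ₂ : ℝ} {z : ℂ}

lemma one_le_re_omegaSym (hμ : 0 < μ) (hρ : 0 ≤ ρ) (hz : 0 ≤ z.re) :
    1 ≤ (omegaSym μ ρ z).re := by
  refine one_le_re_cpow_half ?_
  rw [add_re, one_re, div_ofReal_re, re_ofReal_mul, le_add_iff_nonneg_right]
  positivity

lemma omegaSym_analyticAt (hω : 0 < (omegaSym μ ρ z).re) : AnalyticAt ℂ (omegaSym μ ρ) z := by
  have h_slit := cpow_half_re_pos_iff.mp hω
  unfold omegaSym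
  fun_prop (disch := assumption)

lemma numSym_analyticAt (h₁ : 0 < (omegaSym μ₁ ρ₁ z).re) (h₂ : 0 < (omegaSym μ₂ ρ₂ z).re) :
    AnalyticAt ℂ (numSym μ₁ μ₂ ρ₁ ρ₂) z := by
  have hω₁ := omegaSym_analyticAt h₁
  have hω₂ := omegaSym_analyticAt h₂
  unfold numSym
  fun_prop (disch := simp [ne_zero_of_re_pos, sq_add_one_ne_zero_of_re_pos, h₁, h₂])

lemma psiSym_analyticAt (h₁ : 0 < (omegaSym μ₁ ρ₁ z).re) (h₂ : 0 < (omegaSym μ₂ ρ₂ z).re) :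
    AnalyticAt ℂ (psiSym μ₁ μ₂ ρ₁ ρ₂) z := by
  have hω₁ := omegaSym_analyticAt h₁
  have hω₂ := omegaSym_analyticAt h₂
  unfold psiSym
  fun_prop (disch := simp [ne_zero_of_re_pos, sq_add_one_ne_zero_of_re_pos, h₁, h₂])

lemma psiSym_eq_mul (h₁ : 0 < (omegaSym μ₁ ρ₁ z).re) (h₂ : 0 < (omegaSym μ₂ ρ₂ z).re) :
    psiSym μ₁ μ₂ ρ₁ ρ₂ z =
      (omegaSym μ₁ ρ₁ z + 1) / (omegaSym μ₁ ρ₁ z ^ 2 + 1) *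
        ((omegaSym μ₂ ρ₂ z + 1) / (omegaSym μ₂ ρ₂ z ^ 2 + 1)) *
        (μ₂ * factorRatio (omegaSym μ₂ ρ₂ z) + μ₁ * factorRatio (omegaSym μ₁ ρ₁ z)) := by
  rw [psiSym, ← mul_factorRatio h₁, ← mul_factorRatio h₂]
  ring

lemma psiSym_ne_zero (hμ₁ : 0 < μ₁) (hμ₂ : 0 < μ₂)
    (h₁ : 0 < (omegaSym μ₁ ρ₁ z).re) (h₂ : 0 < (omegaSym μ₂ ρ₂ z).re)
    (hnorm₁ : 1 ≤ ‖omegaSym μ₁ ρ₁ z‖) (hnorm₂ : 1 ≤ ‖omegaSym μ₂ ρ₂ z‖) :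
    psiSym μ₁ μ₂ ρ₁ ρ₂ z ≠ 0 := by
  have h_factor {w : ℂ} (hw : 0 < w.re) : (w + 1) / (w ^ 2 + 1) ≠ 0 :=
    div_ne_zero (add_one_ne_zero_of_re_pos hw) (sq_add_one_ne_zero_of_re_pos hw)
  have h_ratio₁ := factorRatio_re_pos h₁ hnorm₁
  have h_ratio₂ := factorRatio_re_pos h₂ hnorm₂
  rw [psiSym_eq_mul h₁ h₂]
  refine mul_ne_zero (mul_ne_zero (h_factor h₁) (h_factor h₂)) (ne_zero_of_re_pos ?_)
  rw [add_re, re_ofReal_mul, re_ofReal_mul]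
  positivity

/-- For `ρ_j > 0`, the conditions on `ω_j` say that `z` is off the cut `(-∞, -μ_j / ρ_j]` and
outside the open disc of radius `μ_j / ρ_j` about `-μ_j / ρ_j`. -/
theorem ell_analytic_general (hμ₁ : 0 < μ₁) (hμ₂ : 0 < μ₂)
    (h₁ : 0 < (omegaSym μ₁ ρ₁ z).re) (h₂ : 0 < (omegaSym μ₂ ρ₂ z).re)
    (hnorm₁ : 1 ≤ ‖omegaSym μ₁ ρ₁ z‖) (hnorm₂ : 1 ≤ ‖omegaSym μ₂ ρ₂ z‖) :
    AnalyticAt ℂ (ellSym μ₁ μ₂ ρ₁ ρ₂) z :=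
  (numSym_analyticAt h₁ h₂).div (psiSym_analyticAt h₁ h₂)
    (psiSym_ne_zero hμ₁ hμ₂ h₁ h₂ hnorm₁ hnorm₂)

end

/-- `ℓ` is analytic at every point of the closed right half-plane. -/
theorem ell_analytic (μ₁ μ₂ ρ₁ ρ₂ : ℝ)
    (hμ₁ : 0 < μ₁) (hμ₂ : 0 < μ₂) (hρ₁ : 0 < ρ₁) (hρ₂ : 0 < ρ₂) :
    ∀ z₀ : ℂ, 0 ≤ z₀.re → AnalyticAt ℂ (ellSym μ₁ μ₂ ρ₁ ρ₂) z₀ := by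
  intro z₀ hz₀
  have h₁ := one_le_re_omegaSym hμ₁ hρ₁.le hz₀
  have h₂ := one_le_re_omegaSym hμ₂ hρ₂.le hz₀
  exact ell_analytic_general hμ₁ hμ₂ (one_pos.trans_le h₁) (one_pos.trans_le h₂)
    (h₁.trans (re_le_norm _)) (h₂.trans (re_le_norm _))
end

section
/- Let μ₁, μ₂, ρ₁, ρ₂ > 0 and let z ∈ ℂ satisfy Re z ≥ 0 and Im z ≥ 0. Then each of the four summands of r₂(z), namely (ω₁(z)+ω₂(z))(ω₁(z)+1)(ω₂(z)+1), 2(ω₁(z)−1)(ω₂(z)−1), (μ₂/μ₁)·(2(ω₂(z)−1) + (ω₂(z)²+1)(ω₂(z)+1)), and (μ₁/μ₂)·(2(ω₁(z)−1) + (ω₁(z)²+1)(ω₁(z)+1)), has nonnegative imaginary part. -/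
open Complex

/-!
The principal root halves arguments, so `ω` maps the closed first quadrant into the sector
`0 ≤ arg ≤ π / 4`; moreover `ω - 1` stays in the first quadrant, because
`‖1 + ζ‖ ≥ Re (1 + ζ) ≥ 1` for `ζ = ρ z / μ`. The product of two elements of the sector lies in
the first quadrant, and the product of two elements of the first quadrant has nonnegative
imaginary part. Both regions are closed under addition and contain `1`, so this covers every
product occurring in the summands.
-/

/-- The closed first quadrant of `ℂ`, as an additive submonoid: it is where `z` and `ω(z) - 1`
live. -/
def firstQuadrant : AddSubmonoid ℂ where
  carrier := {z | 0 ≤ z.re ∧ 0 ≤ z.im}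
  zero_mem' := by simp
  add_mem' ha hb := ⟨add_nonneg ha.1 hb.1, add_nonneg ha.2 hb.2⟩

/-- The closed sector `0 ≤ arg z ≤ π / 4` (with the origin), as an additive submonoid: it is where
`ω(z)` lives. It is encoded by linear inequalities in the real and imaginary parts. -/
def halfQuadrant : AddSubmonoid ℂ where
  carrier := {z | 0 ≤ z.im ∧ z.im ≤ z.re}
  zero_mem' := by simp
  add_mem' ha hb := ⟨add_nonneg ha.1 hb.1, add_le_add ha.2 hb.2⟩

lemma one_mem_halfQuadrant : (1 : ℂ) ∈ halfQuadrant :=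
  ⟨by simp, by simp⟩

lemma halfQuadrant_le_firstQuadrant : halfQuadrant ≤ firstQuadrant :=
  fun _ hz => ⟨hz.1.trans hz.2, hz.1⟩

lemma one_mem_firstQuadrant : (1 : ℂ) ∈ firstQuadrant :=
  halfQuadrant_le_firstQuadrant one_mem_halfQuadrant

lemma ofReal_mul_mem_firstQuadrant {c : ℝ} {z : ℂ} (hc : 0 ≤ c) (hz : z ∈ firstQuadrant) :
    (c : ℂ) * z ∈ firstQuadrant :=
  ⟨by simpa only [re_ofReal_mul] using mul_nonneg hc hz.1,
    by simpa only [im_ofReal_mul] using mul_nonneg hc hz.2⟩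

lemma im_mul_nonneg_of_mem_firstQuadrant {a b : ℂ} (ha : a ∈ firstQuadrant)
    (hb : b ∈ firstQuadrant) : 0 ≤ (a * b).im := by
  rw [mul_im]
  exact add_nonneg (mul_nonneg ha.1 hb.2) (mul_nonneg ha.2 hb.1)

lemma mul_mem_firstQuadrant_of_mem_halfQuadrant {a b : ℂ} (ha : a ∈ halfQuadrant)
    (hb : b ∈ halfQuadrant) : a * b ∈ firstQuadrant := by
  have ha' := halfQuadrant_le_firstQuadrant ha
  have hb' := halfQuadrant_le_firstQuadrant hb
  refine ⟨?_, im_mul_nonneg_of_mem_firstQuadrant ha' hb'⟩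
  rw [mul_re]
  exact sub_nonneg.2 (mul_le_mul ha.2 hb.2 hb.1 ha'.1)

lemma cpow_half_mem_halfQuadrant {z : ℂ} (hz : z ∈ firstQuadrant) :
    z ^ ((1 : ℂ) / 2) ∈ halfQuadrant := by
  rw [one_div]
  refine ⟨?_, ?_⟩
  · rw [cpow_inv_two_im_eq_sqrt hz.2]
    exact Real.sqrt_nonneg _
  · rw [cpow_inv_two_im_eq_sqrt hz.2, cpow_inv_two_re]
    have hre : 0 ≤ z.re := hz.1
    gcongr
    linarith

lemma one_add_cpow_half_sub_one_mem_firstQuadrant {z : ℂ} (hz : z ∈ firstQuadrant) :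
    (1 + z) ^ ((1 : ℂ) / 2) - 1 ∈ firstQuadrant := by
  have hmem := cpow_half_mem_halfQuadrant (add_mem one_mem_firstQuadrant hz)
  refine ⟨?_, by simpa only [sub_im, one_im, sub_zero] using hmem.1⟩
  have hre : 1 ≤ (1 + z).re := by simpa using hz.1
  have hnorm : (1 + z).re ≤ ‖1 + z‖ := re_le_norm _
  rw [sub_re, one_re, sub_nonneg, one_div, cpow_inv_two_re, Real.one_le_sqrt]
  linarith

lemma omegaSym_eq (μ ρ : ℝ) (z : ℂ) :
    omegaSym μ ρ z = (1 + ((ρ / μ : ℝ) : ℂ) * z) ^ ((1 : ℂ) / 2) := by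
  rw [omegaSym, ofReal_div, div_mul_eq_mul_div]

lemma omegaSym_mem_halfQuadrant {μ ρ : ℝ} {z : ℂ} (hq : 0 ≤ ρ / μ) (hz : z ∈ firstQuadrant) :
    omegaSym μ ρ z ∈ halfQuadrant := by
  rw [omegaSym_eq]
  exact cpow_half_mem_halfQuadrant
    (add_mem one_mem_firstQuadrant (ofReal_mul_mem_firstQuadrant hq hz))

lemma omegaSym_sub_one_mem_firstQuadrant {μ ρ : ℝ} {z : ℂ} (hq : 0 ≤ ρ / μ)
    (hz : z ∈ firstQuadrant) : omegaSym μ ρ z - 1 ∈ firstQuadrant := by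
  rw [omegaSym_eq]
  exact one_add_cpow_half_sub_one_mem_firstQuadrant (ofReal_mul_mem_firstQuadrant hq hz)

lemma im_two_mul_sub_one_add_sq_add_one_mul_nonneg {w : ℂ} (hw : w ∈ halfQuadrant) :
    0 ≤ (2 * (w - 1) + (w ^ 2 + 1) * (w + 1)).im := by
  have hlinear : 0 ≤ (2 * (w - 1)).im := by simpa using hw.1
  have hsq : w ^ 2 + 1 ∈ firstQuadrant :=
    add_mem (sq w ▸ mul_mem_firstQuadrant_of_mem_halfQuadrant hw hw) one_mem_firstQuadrant
  have hadd : w + 1 ∈ firstQuadrant :=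
    halfQuadrant_le_firstQuadrant (add_mem hw one_mem_halfQuadrant)
  rw [add_im]
  exact add_nonneg hlinear (im_mul_nonneg_of_mem_firstQuadrant hsq hadd)

/-- in the closed first quadrant, each of the four summands of the reduced
Lopatinskii determinant `r₂` has nonnegative imaginary part. -/
theorem r2_summands_nonneg_im (μ₁ μ₂ ρ₁ ρ₂ : ℝ)
    (hμ₁ : 0 < μ₁) (hμ₂ : 0 < μ₂) (hρ₁ : 0 < ρ₁) (hρ₂ : 0 < ρ₂)
    (z : ℂ) (hre : 0 ≤ z.re) (him : 0 ≤ z.im) :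
    0 ≤ ((omegaSym μ₁ ρ₁ z + omegaSym μ₂ ρ₂ z) * (omegaSym μ₁ ρ₁ z + 1) *
          (omegaSym μ₂ ρ₂ z + 1)).im ∧
    0 ≤ (2 * (omegaSym μ₁ ρ₁ z - 1) * (omegaSym μ₂ ρ₂ z - 1)).im ∧
    0 ≤ (((μ₂ : ℂ)/(μ₁ : ℂ)) * (2 * (omegaSym μ₂ ρ₂ z - 1)
          + (omegaSym μ₂ ρ₂ z ^ 2 + 1) * (omegaSym μ₂ ρ₂ z + 1))).im ∧
    0 ≤ (((μ₁ : ℂ)/(μ₂ : ℂ)) * (2 * (omegaSym μ₁ ρ₁ z - 1)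
          + (omegaSym μ₁ ρ₁ z ^ 2 + 1) * (omegaSym μ₁ ρ₁ z + 1))).im := by
  have hz : z ∈ firstQuadrant := ⟨hre, him⟩
  have hq₁ : 0 ≤ ρ₁ / μ₁ := by positivity
  have hq₂ : 0 ≤ ρ₂ / μ₂ := by positivity
  have hω₁ := omegaSym_mem_halfQuadrant hq₁ hz
  have hω₂ := omegaSym_mem_halfQuadrant hq₂ hz
  simp only [← ofReal_div, im_ofReal_mul]
  refine ⟨?_, ?_, ?_, ?_⟩
  · exact im_mul_nonneg_of_mem_firstQuadrant
      (mul_mem_firstQuadrant_of_mem_halfQuadrant (add_mem hω₁ hω₂)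
        (add_mem hω₁ one_mem_halfQuadrant))
      (halfQuadrant_le_firstQuadrant (add_mem hω₂ one_mem_halfQuadrant))
  · have hω₁_sub := omegaSym_sub_one_mem_firstQuadrant hq₁ hz
    have hω₂_sub := omegaSym_sub_one_mem_firstQuadrant hq₂ hz
    rw [two_mul]
    exact im_mul_nonneg_of_mem_firstQuadrant (add_mem hω₁_sub hω₁_sub) hω₂_sub
  · exact mul_nonneg (by positivity) (im_two_mul_sub_one_add_sq_add_one_mul_nonneg hω₂)
  · exact mul_nonneg (by positivity) (im_two_mul_sub_one_add_sq_add_one_mul_nonneg hω₁)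
end

section
/- Let μ₁, μ₂, ρ₁, ρ₂ > 0 and let z ∈ ℂ with z ∉ (−∞, 0] (z is not a nonpositive real number). Then Re(ω_j(z) + 1/ω_j(z)) > 0 for j = 1,2, hence γ(z) := μ₁(ω₁(z) + 1/ω₁(z)) + μ₂(ω₂(z) + 1/ω₂(z)) ≠ 0, and consequently r₁(z) := γ(z) / (ω₁(z)·ω₂(z)·(ω₁(z)+1)·(ω₂(z)+1)) ≠ 0. -/
open Complex

/-!
The principal square root maps the slit plane into the open right half-plane, which is stable under
inversion, addition and multiplication by positive reals. Hence `ω₁`, `ω₂`, `ωⱼ + 1/ωⱼ` and `γ` all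
have positive real part, and neither `γ` nor any factor of the denominator of `r₁` can vanish.
-/

theorem cpow_ofReal_re_pos {w : ℂ} (hw : w ∈ slitPlane) {a : ℝ} (ha : |a| ≤ 1 / 2) :
    0 < (w ^ (a : ℂ)).re := by
  have harg : |arg w| < Real.pi :=
    abs_lt.mpr ⟨neg_pi_lt_arg w, (arg_le_pi w).lt_of_ne (slitPlane_arg_ne_pi hw)⟩
  have hangle : |arg w * a| < Real.pi / 2 :=
    calc |arg w * a| = |arg w| * |a| := abs_mul _ _
      _ ≤ |arg w| * (1 / 2) := by gcongr
      _ < Real.pi / 2 := by linarith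
  rw [cpow_ofReal_re]
  exact mul_pos (Real.rpow_pos_of_pos (norm_pos_iff.mpr (slitPlane_ne_zero hw)) a)
    (Real.cos_pos_of_mem_Ioo (abs_lt.mp hangle))

theorem one_add_ofReal_mul_mem_slitPlane {t : ℝ} (ht : 0 ≤ t) {z : ℂ} (hz : z ∈ slitPlane) :
    1 + t * z ∈ slitPlane := by
  rcases ht.eq_or_lt with rfl | ht
  · simp
  rw [mem_slitPlane_iff] at hz ⊢
  refine hz.imp (fun hre ↦ ?_) (fun him ↦ ?_)
  · rw [add_re, one_re, re_ofReal_mul]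
    positivity
  · rw [add_im, one_im, im_ofReal_mul, zero_add]
    exact mul_ne_zero ht.ne' him

theorem re_add_inv_pos {w : ℂ} (hw : 0 < w.re) : 0 < (w + w⁻¹).re := by
  rw [add_re, inv_re]
  exact add_pos hw (div_pos hw (normSq_pos.mpr (ne_zero_of_re_pos hw)))

theorem omegaSym_re_pos {μ ρ : ℝ} {z : ℂ} (h : 1 + (ρ : ℂ) * z / μ ∈ slitPlane) :
    0 < (omegaSym μ ρ z).re := by
  simpa [omegaSym] using cpow_ofReal_re_pos h (a := 1 / 2) (by norm_num)

theorem one_add_mul_div_mem_slitPlane {μ ρ : ℝ} (hμ : 0 ≤ μ) (hρ : 0 ≤ ρ) {z : ℂ}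
    (hz : z ∈ slitPlane) : 1 + (ρ : ℂ) * z / μ ∈ slitPlane := by
  simpa [mul_div_right_comm] using one_add_ofReal_mul_mem_slitPlane (div_nonneg hρ hμ) hz

theorem r1_ne_zero_general {μ₁ μ₂ ρ₁ ρ₂ : ℝ} (hμ₁ : 0 < μ₁) (hμ₂ : 0 < μ₂) {z : ℂ}
    (h₁ : 1 + (ρ₁ : ℂ) * z / μ₁ ∈ slitPlane) (h₂ : 1 + (ρ₂ : ℂ) * z / μ₂ ∈ slitPlane) :
    0 < (omegaSym μ₁ ρ₁ z + 1 / omegaSym μ₁ ρ₁ z).re ∧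
    0 < (omegaSym μ₂ ρ₂ z + 1 / omegaSym μ₂ ρ₂ z).re ∧
    (μ₁ : ℂ) * (omegaSym μ₁ ρ₁ z + 1 / omegaSym μ₁ ρ₁ z)
      + (μ₂ : ℂ) * (omegaSym μ₂ ρ₂ z + 1 / omegaSym μ₂ ρ₂ z) ≠ 0 ∧
    ((μ₁ : ℂ) * (omegaSym μ₁ ρ₁ z + 1 / omegaSym μ₁ ρ₁ z)
        + (μ₂ : ℂ) * (omegaSym μ₂ ρ₂ z + 1 / omegaSym μ₂ ρ₂ z)) /
      (omegaSym μ₁ ρ₁ z * omegaSym μ₂ ρ₂ z * (omegaSym μ₁ ρ₁ z + 1) *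
        (omegaSym μ₂ ρ₂ z + 1)) ≠ 0 := by
  have hω₁ := omegaSym_re_pos h₁
  have hω₂ := omegaSym_re_pos h₂
  simp only [one_div]
  set ω₁ := omegaSym μ₁ ρ₁ z
  set ω₂ := omegaSym μ₂ ρ₂ z
  have hsum₁ : 0 < (ω₁ + ω₁⁻¹).re := re_add_inv_pos hω₁
  have hsum₂ : 0 < (ω₂ + ω₂⁻¹).re := re_add_inv_pos hω₂
  have hγ : (μ₁ : ℂ) * (ω₁ + ω₁⁻¹) + μ₂ * (ω₂ + ω₂⁻¹) ≠ 0 := ne_zero_of_re_pos <| by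
    rw [add_re, re_ofReal_mul, re_ofReal_mul]
    positivity
  have add_one_ne_zero {w : ℂ} (hw : 0 < w.re) : w + 1 ≠ 0 := ne_zero_of_re_pos <| by
    rw [add_re, one_re]
    positivity
  have hden : ω₁ * ω₂ * (ω₁ + 1) * (ω₂ + 1) ≠ 0 :=
    mul_ne_zero (mul_ne_zero (mul_ne_zero (ne_zero_of_re_pos hω₁) (ne_zero_of_re_pos hω₂))
      (add_one_ne_zero hω₁)) (add_one_ne_zero hω₂)
  exact ⟨hsum₁, hsum₂, hγ, div_ne_zero hγ hden⟩

/-- for `z ∉ (−∞, 0]` one has `Re(ω_j(z) + 1/ω_j(z)) > 0` for `j = 1,2`,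
hence `γ(z) = μ₁(ω₁ + 1/ω₁) + μ₂(ω₂ + 1/ω₂) ≠ 0` and
`r₁(z) = γ(z)/(ω₁ω₂(ω₁+1)(ω₂+1)) ≠ 0`. -/
theorem r1_ne_zero (μ₁ μ₂ ρ₁ ρ₂ : ℝ)
    (hμ₁ : 0 < μ₁) (hμ₂ : 0 < μ₂) (hρ₁ : 0 < ρ₁) (hρ₂ : 0 < ρ₂)
    (z : ℂ) (hz : ¬ (z.im = 0 ∧ z.re ≤ 0)) :
    0 < (omegaSym μ₁ ρ₁ z + 1 / omegaSym μ₁ ρ₁ z).re ∧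
    0 < (omegaSym μ₂ ρ₂ z + 1 / omegaSym μ₂ ρ₂ z).re ∧
    (μ₁ : ℂ) * (omegaSym μ₁ ρ₁ z + 1 / omegaSym μ₁ ρ₁ z)
      + (μ₂ : ℂ) * (omegaSym μ₂ ρ₂ z + 1 / omegaSym μ₂ ρ₂ z) ≠ 0 ∧
    ((μ₁ : ℂ) * (omegaSym μ₁ ρ₁ z + 1 / omegaSym μ₁ ρ₁ z)
        + (μ₂ : ℂ) * (omegaSym μ₂ ρ₂ z + 1 / omegaSym μ₂ ρ₂ z)) /
      (omegaSym μ₁ ρ₁ z * omegaSym μ₂ ρ₂ z * (omegaSym μ₁ ρ₁ z + 1) *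
        (omegaSym μ₂ ρ₂ z + 1)) ≠ 0 := by
  have hz' : z ∈ slitPlane := by
    rwa [mem_slitPlane_iff, or_comm, ← not_le, ← not_and_or]
  exact r1_ne_zero_general hμ₁ hμ₂ (one_add_mul_div_mem_slitPlane hμ₁.le hρ₁.le hz')
    (one_add_mul_div_mem_slitPlane hμ₂.le hρ₂.le hz')
end
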